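/- Let G be a finite group, let τ be a character of G such that every irreducible character of G is a constituent of τ, and let δ be any nonzero character of G. Then every irreducible character of G is a constituent of the product τ·δ. -/

import Mathlib

open scoped BigOperators

namespace McKayGraphs

/-- The standard inner product of class functions on a finite group `G`:
`⟨φ,ψ⟩ = |G|⁻¹ Σ_{g∈G} φ(g)·conj(ψ(g))`. -/
noncomputable def charInner {G : Type*} [Group G] (φ ψ : G → ℂ) : ℂ :=
  (Nat.card G : ℂ)⁻¹ * ∑ᶠ g, φ g * (starRingEnd ℂ) (ψ g)

/-- `χ : G → ℂ` is a character if it is the trace function of a finite-dimensional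
complex representation of `G`. -/
def IsChar {G : Type*} [Group G] (χ : G → ℂ) : Prop :=
  ∃ (d : ℕ) (ρ : G →* Matrix.GeneralLinearGroup (Fin d) ℂ),
    ∀ g, χ g = Matrix.trace (ρ g : Matrix (Fin d) (Fin d) ℂ)

/-- An irreducible character of `G`: a character with `⟨χ,χ⟩ = 1`. -/
def IsIrrChar {G : Type*} [Group G] (χ : G → ℂ) : Prop :=
  IsChar χ ∧ charInner χ χ = 1

/-- `ψ` is a constituent of `φ` if `⟨φ,ψ⟩ ≠ 0`. -/
def IsConstituent {G : Type*} [Group G] (ψ φ : G → ℂ) : Prop :=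
  charInner φ ψ ≠ 0

section Helpers

open scoped ComplexOrder
open Representation Module

/-- `trace (ρ g⁻¹)` is the conjugate of `trace (ρ g)`, by averaging a Hermitian form. -/
lemma trace_inv_eq_conj {G : Type*} [Group G] [Finite G] {d : ℕ}
    (ρ : G →* Matrix.GeneralLinearGroup (Fin d) ℂ) (g : G) :
    Matrix.trace (ρ g⁻¹ : Matrix (Fin d) (Fin d) ℂ) =
      (starRingEnd ℂ) (Matrix.trace (ρ g : Matrix (Fin d) (Fin d) ℂ)) := by
  classical
  have := Fintype.ofFinite G
  let M : G → Matrix (Fin d) (Fin d) ℂ := fun g => (ρ g : Matrix (Fin d) (Fin d) ℂ)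
  have hM : ∀ a b, M (a * b) = M a * M b := fun a b => by simp [M]
  have hM1 : M 1 = 1 := by simp [M]
  let H : Matrix (Fin d) (Fin d) ℂ := ∑ x, (M x).conjTranspose * M x
  have hH : H.PosDef := by
    have h1 : H = (M 1).conjTranspose * M 1 +
        ∑ x ∈ Finset.univ.erase (1 : G), (M x).conjTranspose * M x :=
      (Finset.add_sum_erase _ _ (Finset.mem_univ _)).symm
    rw [h1]
    refine Matrix.PosDef.add_posSemidef ?_ ?_
    · rw [hM1]; simpa using Matrix.PosDef.one
    · exact Matrix.posSemidef_sum _ fun x _ => Matrix.posSemidef_conjTranspose_mul_self _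
  have hinv : (M g).conjTranspose * H * M g = H := by
    simp only [H, Finset.mul_sum, Finset.sum_mul]
    refine Fintype.sum_equiv (Equiv.mulRight g) _ _ fun x => ?_
    simp [hM, Matrix.conjTranspose_mul, Matrix.mul_assoc]
  have hu : IsUnit H.det := (Matrix.isUnit_iff_isUnit_det _).mp hH.isUnit
  have e : H * M g⁻¹ = (M g).conjTranspose * H := by
    calc H * M g⁻¹ = (M g).conjTranspose * H * (M g * M g⁻¹) := by
          rw [← Matrix.mul_assoc, hinv]
      _ = _ := by rw [← hM]; simp [hM1]
  have e2 : M g⁻¹ = H⁻¹ * ((M g).conjTranspose * H) := by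
    rw [← e, Matrix.nonsing_inv_mul_cancel_left _ _ hu]
  change Matrix.trace (M g⁻¹) = star (Matrix.trace (M g))
  rw [e2, Matrix.trace_mul_comm, Matrix.mul_assoc, Matrix.mul_nonsing_inv _ hu, Matrix.mul_one,
    Matrix.trace_conjTranspose]

/-- The character of any finite-dimensional representation is a character. -/
lemma exists_matrix {G V : Type*} [Group G] [AddCommGroup V] [Module ℂ V]
    [FiniteDimensional ℂ V] (ρ : Representation ℂ G V) :
    ∃ (d : ℕ) (M : G →* Matrix.GeneralLinearGroup (Fin d) ℂ),
      ∀ g, ρ.character g = Matrix.trace (M g : Matrix (Fin d) (Fin d) ℂ) := by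
  let b := Module.finBasis ℂ V
  refine ⟨_, MonoidHom.toHomUnits
    ((LinearMap.toMatrixAlgEquiv b).toMulEquiv.toMonoidHom.comp ρ), fun g => ?_⟩
  simp only [MonoidHom.coe_toHomUnits, MonoidHom.comp_apply, Representation.character]
  exact LinearMap.trace_eq_matrix_trace ℂ b (ρ g)

lemma exists_rep {G : Type*} [Group G] {χ : G → ℂ} (h : IsChar χ) :
    ∃ (d : ℕ) (ρ : Representation ℂ G (Fin d → ℂ)), χ = ρ.character := by
  obtain ⟨d, M, hM⟩ := h
  refine ⟨d, (Matrix.toLinAlgEquiv' (R := ℂ) (n := Fin d)).toMulEquiv.toMonoidHom.comp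
    ((Units.coeHom _).comp M), funext fun g => ?_⟩
  rw [hM]
  exact (Matrix.trace_toLin'_eq _).symm

lemma character_inv {G V : Type*} [Group G] [Finite G] [AddCommGroup V] [Module ℂ V]
    [FiniteDimensional ℂ V] (ρ : Representation ℂ G V) (g : G) :
    ρ.character g⁻¹ = (starRingEnd ℂ) (ρ.character g) := by
  obtain ⟨d, M, hM⟩ := exists_matrix ρ
  rw [hM, hM, trace_inv_eq_conj]

lemma charInner_eq_finrank {G V W : Type*} [Group G] [Finite G] [AddCommGroup V] [Module ℂ V]
    [FiniteDimensional ℂ V] [AddCommGroup W] [Module ℂ W] [FiniteDimensional ℂ W]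
    (ρ : Representation ℂ G V) (σ : Representation ℂ G W) :
    charInner σ.character ρ.character = (finrank ℂ (IntertwiningMap ρ σ) : ℂ) := by
  have := Fintype.ofFinite G
  have : Invertible (Nat.card G : ℂ) := invertibleOfNonzero (by simp)
  rw [← card_inv_mul_sum_char_mul_char_eq_finrank, charInner, finsum_eq_sum_of_fintype]
  simp only [character_inv]

lemma charInner_symm {G : Type*} [Group G] [Finite G] (φ ψ : G → ℂ) :
    charInner φ ψ = (starRingEnd ℂ) (charInner ψ φ) := by
  have := Fintype.ofFinite G
  simp [charInner, finsum_eq_sum_of_fintype, mul_comm]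

/-- A nonzero finite-dimensional representation has an irreducible subrepresentation. -/
lemma exists_irreducible {G V : Type*} [Group G] [AddCommGroup V] [Module ℂ V]
    [FiniteDimensional ℂ V] [Nontrivial V] (ρ : Representation ℂ G V) :
    ∃ S : Subrepresentation ρ, IsIrreducible S.toRepresentation := by
  have hwf : WellFounded (fun a b : Subrepresentation ρ => a.toSubmodule < b.toSubmodule) :=
    InvImage.wf _ (wellFounded_lt (α := Submodule ℂ V))
  have hne : ∃ S : Subrepresentation ρ, S.toSubmodule ≠ ⊥ := ⟨⊤, top_ne_bot (α := Submodule ℂ V)⟩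
  obtain ⟨S, hS, hmin⟩ := hwf.has_min {S | S.toSubmodule ≠ ⊥} hne
  refine ⟨S, ?_⟩
  have hnt : Nontrivial (Subrepresentation S.toRepresentation) := by
    refine ⟨⊥, ⊤, fun h => hS ?_⟩
    have h2 : (⊥ : Submodule ℂ S.toSubmodule) = ⊤ := congrArg Subrepresentation.toSubmodule h
    rw [← Submodule.map_subtype_top S.toSubmodule, ← h2, Submodule.map_bot]
  refine ⟨fun U => ?_⟩
  let U' : Subrepresentation ρ := ⟨U.toSubmodule.map S.toSubmodule.subtype, by
    rintro g _ ⟨v, hv, rfl⟩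
    exact ⟨S.toRepresentation g v, U.apply_mem_toSubmodule g hv, rfl⟩⟩
  by_cases hU : U.toSubmodule = ⊥
  · left
    exact Subrepresentation.toSubmodule_injective hU
  · right
    apply Subrepresentation.toSubmodule_injective
    change U.toSubmodule = ⊤
    have hU' : U'.toSubmodule ≠ ⊥ := by
      intro h
      apply hU
      apply Submodule.map_injective_of_injective S.toSubmodule.injective_subtype
      rw [Submodule.map_bot]
      exact h
    have hle : U'.toSubmodule ≤ S.toSubmodule := Submodule.map_subtype_le _ _
    have heq : U'.toSubmodule = S.toSubmodule := by
      by_contra hc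
      exact hmin U' hU' (lt_of_le_of_ne hle hc)
    apply Submodule.map_injective_of_injective S.toSubmodule.injective_subtype
    rw [Submodule.map_subtype_top]
    exact heq

lemma charInner_ne_zero_of_irreducible {G U V W : Type*} [Group G] [Finite G]
    [AddCommGroup U] [Module ℂ U] [FiniteDimensional ℂ U]
    [AddCommGroup V] [Module ℂ V] [FiniteDimensional ℂ V]
    [AddCommGroup W] [Module ℂ W] [FiniteDimensional ℂ W]
    (T : Representation ℂ G U) (ρ : Representation ℂ G W) (σ : Representation ℂ G V)
    (hσ : IsIrreducible σ) (i : IntertwiningMap σ ρ) (hi : Function.Injective i)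
    (hall : ∀ ψ : G → ℂ, IsIrrChar ψ → IsConstituent ψ T.character) :
    charInner T.character ρ.character ≠ 0 := by
  have hirr : IsIrrChar σ.character := by
    refine ⟨exists_matrix _, ?_⟩
    rw [charInner_eq_finrank, Representation.IsIrreducible.finrank_intertwiningMap_self]
    simp
  have h1 := hall _ hirr
  unfold IsConstituent at h1
  rw [charInner_symm, charInner_eq_finrank] at h1 ⊢
  intro h2
  apply h1
  simp only [map_natCast, Nat.cast_eq_zero] at h2 ⊢
  rw [Module.finrank_zero_iff] at h2 ⊢
  refine ⟨fun f f' => ?_⟩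
  have h3 : i.comp f = i.comp f' := Subsingleton.elim _ _
  exact DFunLike.ext _ _ fun x => hi (DFunLike.congr_fun h3 x)

end Helpers

/-- **Absorption principle** (used in the proofs of Theorem 2 and Proposition 5.3 of
Liebeck–Shalev–Tiep). If every irreducible character of a finite group `G` is a
constituent of the character `τ`, and `δ` is any nonzero character of `G`, then
every irreducible character of `G` is a constituent of `τ·δ`. -/
theorem covers_irr_mul {G : Type*} [Group G] [Finite G]
    (τ δ : G → ℂ) (hτ : IsChar τ) (hδ : IsChar δ) (hδ0 : δ ≠ 0)
    (hall : ∀ ψ : G → ℂ, IsIrrChar ψ → IsConstituent ψ τ) :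
    ∀ ψ : G → ℂ, IsIrrChar ψ → IsConstituent ψ (τ * δ) := by
  intro ψ hψ
  obtain ⟨t, T, rfl⟩ := exists_rep hτ
  obtain ⟨a, D, rfl⟩ := exists_rep hδ
  obtain ⟨hψc, hψ1⟩ := hψ
  obtain ⟨b, P, rfl⟩ := exists_rep hψc
  have ha : a ≠ 0 := by
    rintro rfl
    apply hδ0
    funext g
    have h0 : D g = 0 := Subsingleton.elim _ _
    simp [Representation.character, h0]
  have hb : b ≠ 0 := by
    rintro rfl
    have h0 : P.character = 0 := by
      funext g
      have h0 : P g = 0 := Subsingleton.elim _ _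
      simp [Representation.character, h0]
    rw [h0] at hψ1
    simp [charInner] at hψ1
  have : NeZero a := ⟨ha⟩
  have : NeZero b := ⟨hb⟩
  have key : charInner (T.character * D.character) P.character =
      charInner T.character (Representation.linHom D P).character := by
    unfold charInner
    congr 1
    refine finsum_congr fun g => ?_
    rw [Representation.char_linHom, character_inv]
    simp [mul_assoc]
  unfold IsConstituent
  rw [key]
  obtain ⟨S, hS⟩ := exists_irreducible (Representation.linHom D P)
  exact charInner_ne_zero_of_irreducible (V := S.toSubmodule) T (Representation.linHom D P)
    S.toRepresentation hS ⟨S.toSubmodule.subtype, fun g => rfl⟩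
    S.toSubmodule.injective_subtype hall

end McKayGraphs
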